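/- Let k, l ≥ 2 be integers, set n = kl, and assume n > 6. Then there exists a prime p not dividing E_n such that ν_p((k!)^l · l!) < ν_p(n!), where E_n := D_n + (−1)^{n−1}(n−1). -/

import Mathlib

/-- base-`p` digit sum -/
def digSum (p n : ℕ) : ℕ := (p.digits n).sum

lemma digSum_le (p n : ℕ) : digSum p n ≤ n := Nat.digit_sum_le p n

lemma digSum_fact (p n : ℕ) (hp : p.Prime) :
    (p - 1) * padicValNat p (Nat.factorial n) + digSum p n = n := by
  haveI := Fact.mk hp
  have h := @sub_one_mul_padicValNat_factorial p _ n
  have h2 := digSum_le p n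
  unfold digSum at *
  omega

lemma digSum_rec (p q r : ℕ) (hp : p.Prime) (hr : r < p) :
    digSum p (p * q + r) = digSum p q + r := by
  unfold digSum
  by_cases h : q = 0 ∧ r = 0
  · simp [h.1, h.2]
  · rw [add_comm (p * q) r, Nat.digits_add p hp.one_lt r q hr (by tauto)]
    simp [add_comm]

lemma digSum_mul_base (p q : ℕ) (hp : p.Prime) : digSum p (p * q) = digSum p q := by
  simpa using digSum_rec p q 0 hp hp.pos

lemma digSum_add_le (p a b : ℕ) (hp : p.Prime) :
    digSum p (a + b) ≤ digSum p a + digSum p b := by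
  haveI := Fact.mk hp
  have ha := digSum_fact p a hp
  have hb := digSum_fact p b hp
  have hab := digSum_fact p (a + b) hp
  have hv : padicValNat p (Nat.factorial a) + padicValNat p (Nat.factorial b)
      ≤ padicValNat p (Nat.factorial (a + b)) := by
    rw [← padicValNat.mul (Nat.factorial_ne_zero _) (Nat.factorial_ne_zero _)]
    exact (padicValNat_dvd_iff_le (Nat.factorial_ne_zero _)).1
      (pow_padicValNat_dvd.trans (Nat.factorial_mul_factorial_dvd_factorial_add a b))
  have := Nat.mul_le_mul_left (p - 1) hv
  rw [mul_add] at this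
  omega

lemma digSum_nmul_le (p a b : ℕ) (hp : p.Prime) :
    digSum p (a * b) ≤ a * digSum p b := by
  induction a with
  | zero => simp [digSum]
  | succ a ih =>
    have := digSum_add_le p (a * b) b hp
    rw [add_mul, add_mul, one_mul, one_mul]
    omega

lemma digSum_mul_le (p b : ℕ) (hp : p.Prime) (a : ℕ) :
    digSum p (a * b) ≤ digSum p a * digSum p b := by
  induction a using Nat.strong_induction_on with
  | _ a ih =>
    rcases Nat.eq_zero_or_pos a with rfl | ha
    · simp [digSum]
    · have h1 := ih (a / p) (Nat.div_lt_self ha hp.one_lt)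
      have h2 := digSum_rec p (a / p) (a % p) hp (Nat.mod_lt _ hp.pos)
      rw [Nat.div_add_mod] at h2
      have h3 : a * b = p * (a / p * b) + (a % p) * b := by
        conv_lhs => rw [← Nat.div_add_mod a p]
        ring
      have h4 := digSum_add_le p (p * (a / p * b)) ((a % p) * b) hp
      rw [digSum_mul_base p _ hp] at h4
      have h5 := digSum_nmul_le p (a % p) b hp
      rw [h3, h2, add_mul]
      omega

lemma digSum_pos (p : ℕ) (hp : p.Prime) (a : ℕ) (ha : 0 < a) : 0 < digSum p a := by
  have h := digSum_mul_le p 1 hp a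
  haveI := Fact.mk hp
  have h := @sub_one_mul_padicValNat_factorial_lt_of_ne_zero p _ a ha.ne'
  have := digSum_fact p a hp
  omega

lemma pow_of_digSum (p : ℕ) (hp : p.Prime) (a : ℕ) (ha : 0 < a) (h : digSum p a ≤ 1) :
    ∃ i, a = p ^ i := by
  induction a using Nat.strong_induction_on with
  | _ a ih =>
    have h2 := digSum_rec p (a / p) (a % p) hp (Nat.mod_lt _ hp.pos)
    have h3 := Nat.div_add_mod a p
    rw [h3] at h2
    rcases Nat.eq_zero_or_pos (a / p) with h0 | h0
    · rw [h0] at h3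
      refine ⟨0, ?_⟩
      simp at h3 ⊢
      omega
    · have := digSum_pos p hp _ h0
      obtain ⟨i, hi⟩ := ih (a / p) (Nat.div_lt_self ha hp.one_lt) h0 (by omega)
      refine ⟨i + 1, ?_⟩
      have : a % p = 0 := by omega
      rw [pow_succ, ← hi]
      rw [this] at h3
      rw [mul_comm]; omega

lemma digSum_lt (p : ℕ) (hp : p.Prime) (a : ℕ) (ha : p ≤ a) : digSum p a < a := by
  have h2 := digSum_rec p (a / p) (a % p) hp (Nat.mod_lt _ hp.pos)
  have h3 := Nat.div_add_mod a p
  rw [h3] at h2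
  have h4 := digSum_le p (a / p)
  have h5 : 0 < a / p := Nat.div_pos ha hp.pos
  have := hp.two_le
  nlinarith

lemma digSum_self (p : ℕ) (hp : p.Prime) (a : ℕ) (ha : a < p) : digSum p a = a := by
  have := digSum_rec p 0 a hp ha
  simpa [digSum] using this

lemma val_lt (p k l : ℕ) (hp : p.Prime)
    (h : digSum p (k * l) + l < l * digSum p k + digSum p l) :
    padicValNat p ((Nat.factorial k) ^ l * Nat.factorial l)
      < padicValNat p (Nat.factorial (k * l)) := by
  haveI := Fact.mk hp
  rw [padicValNat.mul (pow_ne_zero _ (Nat.factorial_ne_zero _)) (Nat.factorial_ne_zero _),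
    padicValNat.pow]
  have h1 := digSum_fact p k hp
  have h2 := digSum_fact p l hp
  have h3 := digSum_fact p (k * l) hp
  have h1' : l * ((p - 1) * padicValNat p (Nat.factorial k)) + l * digSum p k = k * l := by
    rw [← mul_add, h1, mul_comm]
  refine lt_of_mul_lt_mul_left (a := p - 1) ?_ (Nat.zero_le _)
  rw [mul_add, mul_left_comm]
  omega

lemma val_lt_big (p k l : ℕ) (hp : p.Prime) (hk : 2 ≤ k) (hl : p ≤ l)
    (hpow : ∀ i, k ≠ p ^ i) :
    padicValNat p ((Nat.factorial k) ^ l * Nat.factorial l)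
      < padicValNat p (Nat.factorial (k * l)) := by
  apply val_lt p k l hp
  have h1 := digSum_mul_le p l hp k
  have h2 := digSum_lt p hp l hl
  have h3 : 2 ≤ digSum p k := by
    by_contra hc
    obtain ⟨i, hi⟩ := pow_of_digSum p hp k (by omega) (by omega)
    exact hpow i hi
  obtain ⟨d, hd⟩ := Nat.exists_eq_add_of_le h3
  rw [hd] at h1 ⊢
  nlinarith

lemma val_lt_mod (p k l : ℕ) (hp : p.Prime) (hk : 2 ≤ k)
    (h0 : ¬ p ∣ k) (hm : (k % p) * l ≠ (k * l) % p) :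
    padicValNat p ((Nat.factorial k) ^ l * Nat.factorial l)
      < padicValNat p (Nat.factorial (k * l)) := by
  rcases le_or_gt p l with hl | hl
  · apply val_lt_big p k l hp hk hl
    intro i hi
    rcases Nat.eq_zero_or_pos i with rfl | hi0
    · simp at hi; omega
    · exact h0 (hi ▸ dvd_pow_self p hi0.ne')
  · apply val_lt p k l hp
    rw [digSum_self p hp l hl]
    have hge : p ≤ l * (k % p) := by
      by_contra hc
      apply hm
      rw [mul_comm l] at hc
      rw [Nat.mul_mod k l p, Nat.mod_eq_of_lt hl, Nat.mod_eq_of_lt (a := k % p * l) (by omega)]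
    have h2 := digSum_rec p (k / p) (k % p) hp (Nat.mod_lt _ hp.pos)
    rw [Nat.div_add_mod] at h2
    have h3 : k * l = p * (l * (k / p)) + l * (k % p) := by
      conv_lhs => rw [← Nat.div_add_mod k p]
      ring
    have h4 := digSum_add_le p (p * (l * (k / p))) (l * (k % p)) hp
    rw [digSum_mul_base p _ hp, ← h3] at h4
    have h5 := digSum_nmul_le p l (k / p) hp
    have h6 := digSum_lt p hp _ hge
    rw [h2, mul_add]
    omega

lemma derang_base (p N : ℕ) (h : p ∣ N) :
    ((numDerangements N : ℤ) : ZMod p) = (-1) ^ N := by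
  cases N with
  | zero => simp
  | succ m =>
    have h1 : ((m : ZMod p) + 1) = 0 := by
      have := (ZMod.natCast_eq_zero_iff (m + 1) p).2 h
      simpa using this
    rw [numDerangements_succ]
    push_cast
    rw [h1, pow_succ]
    ring

lemma small_not_dvd (p c : ℕ) (N : ℕ) (X : ℤ) (h : (X : ZMod p) = (-1) ^ N * (c : ℕ))
    (hc : ¬ p ∣ c) : ¬ (p : ℤ) ∣ X := by
  intro hd
  rw [(ZMod.intCast_zmod_eq_zero_iff_dvd X p).2 hd] at h
  apply hc
  rw [← ZMod.natCast_eq_zero_iff]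
  rcases neg_one_pow_eq_or (ZMod p) N with h1 | h1 <;> rw [h1] at h
  · simpa using h.symm
  · simpa using h.symm

lemma E0 (p N : ℕ) (hp : p.Prime) (hp3 : 3 ≤ p) (h : p ∣ N) (hN : 0 < N) :
    ¬ (p : ℤ) ∣ ((numDerangements N : ℤ) + (-1) ^ (N - 1) * ((N : ℤ) - 1)) := by
  apply small_not_dvd p 2 N
  · have h1 := derang_base p N h
    have h2 := (ZMod.natCast_eq_zero_iff N p).2 h
    obtain ⟨m, rfl⟩ : ∃ m, N = m + 1 := ⟨N - 1, by omega⟩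
    push_cast at h1 h2 ⊢
    rw [h1]
    rw [h2]
    ring
  · exact Nat.not_dvd_of_pos_of_lt (by norm_num) (by omega)

lemma E34 (p N : ℕ) (h : p ∣ N) :
    (((numDerangements (N + 3) : ℤ) + (-1) ^ (N + 3 - 1) * (((N + 3 : ℕ) : ℤ) - 1) : ℤ) : ZMod p)
      = (-1) ^ N * (4 : ℕ) ∧
    (((numDerangements (N + 4) : ℤ) + (-1) ^ (N + 4 - 1) * (((N + 4 : ℕ) : ℤ) - 1) : ℤ) : ZMod p)
      = (-1) ^ N * (6 : ℕ) := by
  have h1 := derang_base p N h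
  have h2 := (ZMod.natCast_eq_zero_iff N p).2 h
  have e3 : N + 3 - 1 = N + 2 := rfl
  have e4 : N + 4 - 1 = N + 3 := rfl
  rw [e3, e4]
  rw [numDerangements_succ (N + 3), numDerangements_succ (N + 2), numDerangements_succ (N + 1),
    numDerangements_succ N]
  push_cast at h1 ⊢
  rw [h1, h2]
  constructor <;> ring

lemma E3 (p N : ℕ) (hp : p.Prime) (hp5 : 5 ≤ p) (h : p ∣ N - 3) (hN : 3 ≤ N) :
    ¬ (p : ℤ) ∣ ((numDerangements N : ℤ) + (-1) ^ (N - 1) * ((N : ℤ) - 1)) := by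
  obtain ⟨M, rfl⟩ : ∃ M, N = M + 3 := ⟨N - 3, by omega⟩
  exact small_not_dvd p 4 M _ (E34 p M (by simpa using h)).1
    (Nat.not_dvd_of_pos_of_lt (by norm_num) (by omega))

lemma E4 (p N : ℕ) (hp : p.Prime) (hp5 : 5 ≤ p) (h : p ∣ N - 4) (hN : 4 ≤ N) :
    ¬ (p : ℤ) ∣ ((numDerangements N : ℤ) + (-1) ^ (N - 1) * ((N : ℤ) - 1)) := by
  obtain ⟨M, rfl⟩ : ∃ M, N = M + 4 := ⟨N - 4, by omega⟩
  refine small_not_dvd p 6 M _ (E34 p M (by simpa using h)).2 ?_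
  intro hd
  have := Nat.le_of_dvd (by norm_num) hd
  interval_cases p
  · omega
  · exact absurd hp (by norm_num)

lemma prime_cases (m q r : ℕ) (hm : 0 < m) (hqr : (q = 2 ∧ r = 3) ∨ (q = 3 ∧ r = 2))
    (h : ¬ q ∣ m) : (∃ p, p.Prime ∧ 5 ≤ p ∧ p ∣ m) ∨ ∃ j, m = r ^ j := by
  by_cases hc : ∃ p, p.Prime ∧ 5 ≤ p ∧ p ∣ m
  · exact Or.inl hc
  · right
    refine ⟨_, Nat.eq_prime_pow_of_unique_prime_dvd (p := r) hm.ne' ?_⟩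
    intro d hd hdm
    have h5 : d < 5 := by
      by_contra h5
      exact hc ⟨d, hd, by omega, hdm⟩
    have := hd.two_le
    have h4 : d ≠ 4 := by
      rintro rfl
      exact absurd hd (by norm_num)
    have hq : d ≠ q := by
      rintro rfl
      exact h hdm
    omega

lemma pow3_mod8 (j : ℕ) : 3 ^ j % 8 = 1 ∨ 3 ^ j % 8 = 3 := by
  induction j with
  | zero => simp
  | succ j ih => rw [pow_succ]; omega

lemma two_pow_eq (j c : ℕ) (h : 3 ^ j + 1 = 2 ^ c) : 3 ^ j + 1 ≤ 4 := by
  rcases le_or_gt c 2 with hc | hc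
  · rw [h]
    calc 2 ^ c ≤ 2 ^ 2 := Nat.pow_le_pow_right (by norm_num) hc
      _ = 4 := by norm_num
  · obtain ⟨d, rfl⟩ : ∃ d, c = d + 3 := ⟨c - 3, by omega⟩
    rw [pow_add] at h
    have := pow3_mod8 j
    omega

/-- prime dividing `n - 3` -/
lemma use3 (p k l : ℕ) (hp : p.Prime) (hp5 : 5 ≤ p) (hk : 2 ≤ k) (hl : 2 ≤ l) (hl3 : l ≠ 3)
    (hn : 6 < k * l) (hd : p ∣ k * l - 3) :
    ∃ p : ℕ, p.Prime ∧
      ¬ (p : ℤ) ∣ ((numDerangements (k * l) : ℤ) + (-1) ^ (k * l - 1) * (((k * l : ℕ) : ℤ) - 1)) ∧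
      padicValNat p ((Nat.factorial k) ^ l * Nat.factorial l)
        < padicValNat p (Nat.factorial (k * l)) := by
  have hmod : k * l % p = 3 := by
    obtain ⟨c, hc⟩ := hd
    rw [show k * l = 3 + p * c by omega, Nat.add_mul_mod_self_left, Nat.mod_eq_of_lt (by omega)]
  refine ⟨p, hp, E3 p _ hp hp5 hd (by omega), val_lt_mod p k l hp hk ?_ ?_⟩
  · intro h
    have := Nat.mod_eq_zero_of_dvd (h.mul_right l)
    omega
  · rw [hmod]
    intro h
    have h1 : l ∣ 3 := ⟨_, by rw [mul_comm]; exact h.symm⟩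
    have := (Nat.dvd_prime Nat.prime_three).1 h1
    omega

/-- prime dividing `n - 4` -/
lemma use4 (p k l : ℕ) (hp : p.Prime) (hp5 : 5 ≤ p) (hk : 2 ≤ k) (hl : 2 ≤ l) (hlo : l % 2 = 1)
    (hn : 6 < k * l) (hd : p ∣ k * l - 4) :
    ∃ p : ℕ, p.Prime ∧
      ¬ (p : ℤ) ∣ ((numDerangements (k * l) : ℤ) + (-1) ^ (k * l - 1) * (((k * l : ℕ) : ℤ) - 1)) ∧
      padicValNat p ((Nat.factorial k) ^ l * Nat.factorial l)
        < padicValNat p (Nat.factorial (k * l)) := by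
  have hmod : k * l % p = 4 := by
    obtain ⟨c, hc⟩ := hd
    rw [show k * l = 4 + p * c by omega, Nat.add_mul_mod_self_left, Nat.mod_eq_of_lt (by omega)]
  refine ⟨p, hp, E4 p _ hp hp5 hd (by omega), val_lt_mod p k l hp hk ?_ ?_⟩
  · intro h
    have := Nat.mod_eq_zero_of_dvd (h.mul_right l)
    omega
  · rw [hmod]
    intro h
    have h1 : l ∣ 4 := ⟨_, by rw [mul_comm]; exact h.symm⟩
    have := Nat.le_of_dvd (by norm_num) h1
    interval_cases l <;> omega

theorem exists_prime_strict_valuation_imprimitive_alternating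
    (k l : ℕ) (hk : 2 ≤ k) (hl : 2 ≤ l) (n : ℕ) (hn : n = k * l) (hn6 : 6 < n) :
    ∃ p : ℕ, p.Prime ∧
      ¬ (p : ℤ) ∣ ((numDerangements n : ℤ) + (-1) ^ (n - 1) * ((n : ℤ) - 1)) ∧
      padicValNat p ((Nat.factorial k) ^ l * Nat.factorial l) < padicValNat p (Nat.factorial n) := by
  subst hn
  rcases Nat.mod_two_eq_zero_or_one (k * l) with hev | hodd
  · -- even case
    by_cases hl3 : l = 3
    · subst hl3
      refine ⟨3, Nat.prime_three, E0 3 _ Nat.prime_three le_rfl (Dvd.intro_left k rfl) (by omega),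
        val_lt_big 3 k 3 Nat.prime_three hk le_rfl ?_⟩
      intro i hi
      have := pow3_mod8 i
      omega
    rcases prime_cases (k * l - 3) 2 3 (by omega) (by simp) (by omega) with ⟨p, hp, hp5, hd⟩ | ⟨j, hj⟩
    · exact use3 p k l hp hp5 hk hl hl3 hn6 hd
    obtain ⟨i, rfl⟩ : ∃ i, j = i + 2 := by
      refine ⟨j - 2, ?_⟩
      have : ¬ j < 2 := by
        intro h
        interval_cases j <;> omega
      omega
    have hn : k * l = 3 ^ (i + 2) + 3 := by omega
    have hn' : k * l = 9 * 3 ^ i + 3 := by rw [hn, pow_add]; ring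
    have hE := E0 3 (k * l) Nat.prime_three le_rfl (by omega) (by omega)
    by_cases hpow : ∃ a, k = 3 ^ a
    · obtain ⟨a, rfl⟩ := hpow
      have ha : a = 1 := by
        by_contra ha
        rcases Nat.lt_or_ge a 1 with h | h
        · interval_cases a
          omega
        · obtain ⟨b, rfl⟩ : ∃ b, a = b + 2 := ⟨a - 2, by omega⟩
          have : 3 ^ (b + 2) * l = 9 * (3 ^ b * l) := by rw [pow_add]; ring
          omega
      subst ha
      have hl' : l = 3 ^ (i + 1) + 1 := by
        rw [pow_succ]
        omega
      have h3l : ¬ 3 ∣ l := by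
        rw [hl', pow_succ]; omega
      rcases prime_cases l 3 2 (by omega) (by simp) h3l with ⟨p, hp, hp5, hd⟩ | ⟨c, hc⟩
      · refine ⟨p, hp, E0 p _ hp (by omega) (hd.mul_left _) (by omega),
          val_lt_big p _ l hp hk (Nat.le_of_dvd (by omega) hd) ?_⟩
        intro b hb
        rcases Nat.eq_zero_or_pos b with rfl | hb0
        · simp at hb
        · have h1 : p ∣ 3 ^ 1 := hb ▸ dvd_pow_self p hb0.ne'
          have := Nat.le_of_dvd (by norm_num) h1
          omega
      · have h4 := two_pow_eq (i + 1) c (by omega)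
        have h4l : l = 4 := by
          have : 0 < 3 ^ i := by positivity
          rw [pow_succ] at hl' h4
          omega
        subst h4l
        refine ⟨7, by norm_num, ?_, val_lt 7 _ 4 (by norm_num) ?_⟩
        · norm_num [numDerangements]
        · norm_num [digSum]
    · push Not at hpow
      rcases Nat.lt_or_ge l 3 with hl2 | hl2
      · have : l = 2 := by omega
        subst this
        refine ⟨3, Nat.prime_three, hE, val_lt 3 k 2 Nat.prime_three ?_⟩
        have h3 : 2 ≤ digSum 3 k := by
          by_contra hc
          obtain ⟨i, hi⟩ := pow_of_digSum 3 Nat.prime_three k (by omega) (by omega)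
          exact hpow i hi
        have h4 : digSum 3 (k * 2) ≤ 2 := by
          have e : k * 2 = 3 * (3 ^ (i + 1) + 1) := by rw [hn, pow_succ]; ring
          have h5 := digSum_add_le 3 (3 ^ (i + 1)) 1 Nat.prime_three
          have h6 : ∀ t, digSum 3 (3 ^ t) = 1 := by
            intro t
            induction t with
            | zero => simp [digSum]
            | succ t ih => rw [pow_succ, mul_comm, digSum_mul_base _ _ Nat.prime_three, ih]
          have h7 := h6 0
          rw [pow_zero] at h7
          rw [e, digSum_mul_base _ _ Nat.prime_three]
          have := h6 (i + 1)
          omega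
        have h5 := digSum_self 3 Nat.prime_three 2 (by norm_num)
        omega
      · exact ⟨3, Nat.prime_three, hE, val_lt_big 3 k l Nat.prime_three hk hl2 hpow⟩
  · -- odd case
    have hlo : l % 2 = 1 := (Nat.odd_mul.1 (Nat.odd_iff.2 hodd)).2 |> Nat.odd_iff.1
    have hko : k % 2 = 1 := (Nat.odd_mul.1 (Nat.odd_iff.2 hodd)).1 |> Nat.odd_iff.1
    have h9 : 9 ≤ k * l := Nat.mul_le_mul (show 3 ≤ k by omega) (show 3 ≤ l by omega)
    rcases prime_cases (k * l - 4) 2 3 (by omega) (by simp) (by omega) with ⟨p, hp, hp5, hd⟩ | ⟨j, hj⟩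
    · exact use4 p k l hp hp5 hk hl hlo hn6 hd
    obtain ⟨i, rfl⟩ : ∃ i, j = i + 1 := by
      refine ⟨j - 1, ?_⟩
      have : j ≠ 0 := by
        rintro rfl
        simp at hj
        omega
      omega
    have hj' := hj
    rw [pow_succ] at hj'
    rcases prime_cases (k * l - 3) 3 2 (by omega) (by simp) (by omega) with ⟨p, hp, hp5, hd⟩ | ⟨c, hc⟩
    · refine use3 p k l hp hp5 hk hl ?_ hn6 hd
      rintro rfl
      omega
    · have := two_pow_eq (i + 1) c (by omega)
      omega
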